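/- Suppose 1 ≤ S < N and let x₀ ∈ X_S with ‖x₀‖₀ < S. Then the Barankin bound at x₀ equals N σ²: every measurable unbiased estimator x̂ with components square-integrable with respect to P_{x₀} satisfies ε(x₀; x̂) ≥ N σ², and this value is attained by the least-squares estimator x̂_LS(y) = y, which is unbiased with ε(x₀; x̂_LS) = N σ². -/

import Mathlib

open MeasureTheory ProbabilityTheory Filter
open scoped ENNReal Classical

/-- The product Gaussian measure `P_x` on `ℝ^N` with mean `x` and variance `σ²` per coordinate. -/
noncomputable def gaussP (N : ℕ) (σ : ℝ) (x : Fin N → ℝ) : Measure (Fin N → ℝ) :=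
  MeasureTheory.Measure.pi fun i => gaussianReal (x i) (Real.toNNReal (σ ^ 2))

/-- The support of `x`: indices with nonzero entries. Its cardinality is `‖x‖₀`. -/
noncomputable def supp {N : ℕ} (x : Fin N → ℝ) : Finset (Fin N) :=
  Finset.univ.filter fun i => x i ≠ 0

/-- The sparse parameter set `X_S = {x : ‖x‖₀ ≤ S}`. -/
def sparseSet (N S : ℕ) : Set (Fin N → ℝ) := {x | (supp x).card ≤ S}

/-- An estimator is unbiased if each component is `P_x`-integrable with mean `x i`
for every `x ∈ X_S`. -/
def Unbiased (N S : ℕ) (σ : ℝ) (est : (Fin N → ℝ) → Fin N → ℝ) : Prop :=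
  ∀ x ∈ sparseSet N S, ∀ i,
    Integrable (fun y => est y i) (gaussP N σ x) ∧
    (∫ y, est y i ∂gaussP N σ x) = x i

/-- The MSE `ε(x; x̂) = ∫ ‖x̂(y) − x‖₂² dP_x(y)`, as an extended real. -/
noncomputable def MSE (N : ℕ) (σ : ℝ) (est : (Fin N → ℝ) → Fin N → ℝ)
    (x : Fin N → ℝ) : ℝ≥0∞ :=
  ∫⁻ y, ENNReal.ofReal (∑ i, (est y i - x i) ^ 2) ∂gaussP N σ x

/-!
Tilting the product Gaussian by `exp (t yᵢ)` moves its mean by `t σ²` along the `i`-th axis. Since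
`‖x₀‖₀ < S`, the moved mean is still `S`-sparse, so unbiasedness prescribes the mean of `x̂ᵢ` under
the tilted measure. Cauchy–Schwarz against the likelihood ratio (the Hammersley–Chapman–Robbins
inequality) then reads `(t σ²)² ≤ Var(x̂ᵢ) (exp (σ² t²) - 1)`, and `t → 0` gives `σ² ≤ Var(x̂ᵢ)`.
The MSE of an unbiased estimator is the sum of the variances of its components.
-/

open Real
open scoped NNReal Topology

section ChapmanRobbins

variable {Ω : Type*} {mΩ : MeasurableSpace Ω} {μ : Measure Ω} {X Y : Ω → ℝ}

theorem covariance_sq_le_variance_mul_variance [IsFiniteMeasure μ]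
    (hX : MemLp X 2 μ) (hY : MemLp Y 2 μ) :
    cov[X, Y; μ] ^ 2 ≤ Var[X; μ] * Var[Y; μ] := by
  have hquad (c : ℝ) : 0 ≤ Var[X; μ] * (c * c) + 2 * cov[X, Y; μ] * c + Var[Y; μ] := by
    have hvar := variance_add (hX.const_smul c) hY
    rw [variance_smul, covariance_smul_left] at hvar
    linarith [variance_nonneg (c • X + Y) μ]
  have hdiscrim := discrim_le_zero hquad
  rw [discrim] at hdiscrim
  linarith

theorem variance_exp_mul_div_mgf [IsProbabilityMeasure μ] {t : ℝ}
    (hY : MemLp (fun ω => exp (t * Y ω)) 2 μ) :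
    Var[fun ω => exp (t * Y ω) / mgf Y μ t; μ] = mgf Y μ (2 * t) / mgf Y μ t ^ 2 - 1 := by
  have hpos : 0 < mgf Y μ t := mgf_pos (hY.integrable one_le_two)
  have hsq (ω : Ω) : exp (t * Y ω) ^ 2 = exp (2 * t * Y ω) := by
    rw [← exp_nat_mul]
    ring_nf
  simp only [div_eq_mul_inv]
  rw [variance_mul_const, variance_eq_sub hY]
  simp only [Pi.pow_apply, hsq]
  change (mgf Y μ (2 * t) - mgf Y μ t ^ 2) * _ = _
  field_simp

/-- The Hammersley–Chapman–Robbins inequality for exponential tilts. -/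
theorem sq_integral_tilted_sub_integral_le [IsProbabilityMeasure μ] {t : ℝ}
    (hX : MemLp X 2 μ) (hY : MemLp (fun ω => exp (t * Y ω)) 2 μ) :
    ((μ.tilted (t * Y ·))[X] - μ[X]) ^ 2
      ≤ Var[X; μ] * (mgf Y μ (2 * t) / mgf Y μ t ^ 2 - 1) := by
  have hpos : 0 < mgf Y μ t := mgf_pos (hY.integrable one_le_two)
  have hL : MemLp (fun ω => exp (t * Y ω) / mgf Y μ t) 2 μ := by
    simpa only [div_eq_mul_inv] using hY.mul_const (mgf Y μ t)⁻¹
  have hL_mean : ∫ ω, exp (t * Y ω) / mgf Y μ t ∂μ = 1 := by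
    rw [integral_div]
    exact div_self hpos.ne'
  have hcov : cov[fun ω => exp (t * Y ω) / mgf Y μ t, X; μ]
      = (μ.tilted (t * Y ·))[X] - μ[X] := by
    rw [covariance_eq_sub hL hX, hL_mean, one_mul, integral_tilted_mul_eq_mgf]
    rfl
  rw [← hcov, ← variance_exp_mul_div_mgf hY, mul_comm]
  exact covariance_sq_le_variance_mul_variance hL hX

end ChapmanRobbins

section GaussianTilt

theorem tilted_pi {ι : Type*} [Fintype ι] {α : ι → Type*} [∀ i, MeasurableSpace (α i)]
    (μ : ∀ i, Measure (α i)) [∀ i, SigmaFinite (μ i)] (f : ∀ i, α i → ℝ) :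
    (Measure.pi μ).tilted (fun y => ∑ i, f i (y i)) = Measure.pi fun i => (μ i).tilted (f i) := by
  refine (Measure.pi_eq fun s _ => ?_).symm
  simp_rw [tilted_apply_eq_ofReal_integral, integral_div, exp_sum, Measure.restrict_pi_pi]
  rw [integral_fintype_prod_eq_prod fun i z => exp (f i z),
    integral_fintype_prod_eq_prod fun i z => exp (f i z), ← Finset.prod_div_distrib,
    ENNReal.ofReal_prod_of_nonneg fun i _ => by positivity]

theorem tilted_mul_gaussianReal (m : ℝ) (v : ℝ≥0) (t : ℝ) :
    (gaussianReal m v).tilted (t * ·) = gaussianReal (m + v * t) v := by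
  refine Measure.ext_of_complexMGF_id_eq (funext fun z => ?_)
  have hmgf : complexMGF id ((gaussianReal m v).tilted (t * ·)) z
      = complexMGF id (gaussianReal m v) (t + z) / mgf id (gaussianReal m v) t := by
    rw [complexMGF, integral_tilted, complexMGF, ← integral_div]
    refine integral_congr_ae (.of_forall fun y => ?_)
    simp only [mgf, id, Complex.real_smul, Complex.ofReal_div, Complex.ofReal_exp,
      Complex.ofReal_mul, add_mul, Complex.exp_add]
    ring
  rw [hmgf, mgf_id_gaussianReal, complexMGF_id_gaussianReal, complexMGF_id_gaussianReal,
    Complex.ofReal_exp, ← Complex.exp_sub]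
  push_cast
  ring_nf

end GaussianTilt

section GaussianPi

variable {ι : Type*} [Fintype ι]

/-- The law of a vector with independent Gaussian coordinates of means `x i` and variances `v i`;
`gaussP` is the case of equal variances. -/
noncomputable abbrev gaussianPi (x : ι → ℝ) (v : ι → ℝ≥0) : Measure (ι → ℝ) :=
  Measure.pi fun i => gaussianReal (x i) (v i)

variable (x : ι → ℝ) (v : ι → ℝ≥0) (i : ι)

theorem tilted_sum_mul_gaussianPi (u : ι → ℝ) :
    (gaussianPi x v).tilted (fun y => ∑ i, u i * y i)
      = gaussianPi (fun i => x i + v i * u i) v := by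
  simp_rw [gaussianPi, tilted_pi _ fun i z => u i * z, tilted_mul_gaussianReal]

theorem tilted_mul_eval_gaussianPi [DecidableEq ι] (t : ℝ) :
    (gaussianPi x v).tilted (fun y => t * y i)
      = gaussianPi (Function.update x i (x i + v i * t)) v := by
  have hsum (y : ι → ℝ) : ∑ j, (Pi.single i t : ι → ℝ) j * y j = t * y i := by
    simp [Pi.single_apply]
  have hmean : (fun j => x j + v j * (Pi.single i t : ι → ℝ) j)
      = Function.update x i (x i + v i * t) := by
    ext j
    rcases eq_or_ne j i with rfl | hj <;> simp [*]
  simpa only [hsum, hmean] using tilted_sum_mul_gaussianPi x v (Pi.single i t)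

theorem measurePreserving_eval_gaussianPi :
    MeasurePreserving (fun y : ι → ℝ => y i) (gaussianPi x v) (gaussianReal (x i) (v i)) :=
  measurePreserving_eval _ i

theorem memLp_exp_mul_eval_gaussianPi (t : ℝ) :
    MemLp (fun y => exp (t * y i)) 2 (gaussianPi x v) := by
  have hexp : MemLp (fun z => exp (t * z)) 2 (gaussianReal (x i) (v i)) := by
    rw [memLp_two_iff_integrable_sq (by fun_prop)]
    convert integrable_exp_mul_gaussianReal (μ := x i) (v := v i) (2 * t) using 2 with z
    rw [← exp_nat_mul]
    ring_nf
  exact hexp.comp_measurePreserving (measurePreserving_eval_gaussianPi x v i)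

theorem mgf_eval_gaussianPi (t : ℝ) :
    mgf (fun y => y i) (gaussianPi x v) t = exp (x i * t + v i * t ^ 2 / 2) :=
  mgf_gaussianReal (measurePreserving_eval_gaussianPi x v i).map_eq t

theorem sq_integral_update_sub_integral_le_gaussianPi [DecidableEq ι] {e : (ι → ℝ) → ℝ}
    (he : MemLp e 2 (gaussianPi x v)) (t : ℝ) :
    ((gaussianPi (Function.update x i (x i + v i * t)) v)[e] - (gaussianPi x v)[e]) ^ 2
      ≤ Var[e; gaussianPi x v] * (exp (v i * t ^ 2) - 1) := by
  have hmgf : mgf (fun y => y i) (gaussianPi x v) (2 * t)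
      / mgf (fun y => y i) (gaussianPi x v) t ^ 2 = exp (v i * t ^ 2) := by
    rw [mgf_eval_gaussianPi, mgf_eval_gaussianPi, ← exp_nat_mul, ← exp_sub]
    ring_nf
  rw [← tilted_mul_eval_gaussianPi, ← hmgf]
  exact sq_integral_tilted_sub_integral_le he (memLp_exp_mul_eval_gaussianPi x v i t)

end GaussianPi

theorem le_of_eventually_sq_le_mul_exp_sub_one {v V : ℝ} (hV : 0 ≤ V)
    (h : ∀ᶠ t in 𝓝[≠] 0, (v * t) ^ 2 ≤ V * (exp (v * t ^ 2) - 1)) : v ≤ V := by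
  rcases le_or_gt v 0 with hv | hv
  · exact hv.trans hV
  have hbound : ∀ᶠ t in 𝓝[≠] 0, v ≤ V * exp (v * t ^ 2) := by
    filter_upwards [h, self_mem_nhdsWithin] with t ht (ht0 : t ≠ 0)
    have hexp : exp (v * t ^ 2) - 1 ≤ v * t ^ 2 * exp (v * t ^ 2) := by
      have := mul_le_mul_of_nonneg_right (one_sub_le_exp_neg (v * t ^ 2)) (exp_pos (v * t ^ 2)).le
      rw [← exp_add, neg_add_cancel, exp_zero] at this
      linarith
    have hpos : 0 < v * t ^ 2 := by positivity
    refine le_of_mul_le_mul_right ?_ hpos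
    calc v * (v * t ^ 2) = (v * t) ^ 2 := by ring
      _ ≤ V * (exp (v * t ^ 2) - 1) := ht
      _ ≤ V * (v * t ^ 2 * exp (v * t ^ 2)) := by gcongr
      _ = V * exp (v * t ^ 2) * (v * t ^ 2) := by ring
  have hlim : Tendsto (fun t => V * exp (v * t ^ 2)) (𝓝[≠] 0) (𝓝 V) := by
    have hcont : Continuous fun t => V * exp (v * t ^ 2) := by fun_prop
    simpa using (hcont.tendsto 0).mono_left nhdsWithin_le_nhds
  exact ge_of_tendsto hlim hbound

section Barankin

variable {ι : Type*} [Fintype ι] [DecidableEq ι] {x : ι → ℝ} {v : ι → ℝ≥0} {i : ι}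
  {e : (ι → ℝ) → ℝ}

theorem le_variance_of_locally_unbiased (he : MemLp e 2 (gaussianPi x v))
    (hmean : ∀ᶠ s in 𝓝 (x i), (gaussianPi (Function.update x i s) v)[e] = s) :
    v i ≤ Var[e; gaussianPi x v] := by
  have hmean₀ : (gaussianPi x v)[e] = x i := by simpa using hmean.self_of_nhds
  have hshift : Tendsto (fun t : ℝ => x i + v i * t) (𝓝[≠] 0) (𝓝 (x i)) := by
    have hcont : Continuous fun t : ℝ => x i + v i * t := by fun_prop
    simpa using (hcont.tendsto 0).mono_left nhdsWithin_le_nhds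
  refine le_of_eventually_sq_le_mul_exp_sub_one (variance_nonneg _ _) ?_
  filter_upwards [hshift.eventually hmean] with t ht
  simpa [ht, hmean₀] using sq_integral_update_sub_integral_le_gaussianPi x v i he t

theorem le_evariance_of_locally_unbiased (he : AEStronglyMeasurable e (gaussianPi x v))
    (hmean : ∀ᶠ s in 𝓝 (x i), (gaussianPi (Function.update x i s) v)[e] = s) :
    v i ≤ eVar[e; gaussianPi x v] := by
  by_cases he₂ : MemLp e 2 (gaussianPi x v)
  · rw [← ofReal_variance he₂, ← ENNReal.ofReal_coe_nnreal]
    exact ENNReal.ofReal_le_ofReal (le_variance_of_locally_unbiased he₂ hmean)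
  · simp [evariance_eq_top he he₂]

end Barankin

section LeastSquares

variable {ι : Type*} [Fintype ι] (x : ι → ℝ) (v : ι → ℝ≥0) (i : ι)

theorem memLp_eval_gaussianPi : MemLp (fun y => y i) 2 (gaussianPi x v) :=
  (memLp_id_gaussianReal 2).comp_measurePreserving (measurePreserving_eval_gaussianPi x v i)

theorem integral_eval_gaussianPi : ∫ y, y i ∂gaussianPi x v = x i := by
  rw [gaussianPi, integral_eval]
  exact integral_id_gaussianReal

theorem evariance_eval_gaussianPi : eVar[fun y => y i; gaussianPi x v] = v i := by
  rw [← ofReal_variance (memLp_eval_gaussianPi x v i),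
    (measurePreserving_eval_gaussianPi x v i).variance_fun_comp aemeasurable_id',
    variance_fun_id_gaussianReal, ENNReal.ofReal_coe_nnreal]

end LeastSquares

section SparseModel

variable {N S : ℕ} {σ : ℝ} {x : Fin N → ℝ} {est : (Fin N → ℝ) → Fin N → ℝ}

theorem gaussP_eq_gaussianPi (σ : ℝ) (x : Fin N → ℝ) :
    gaussP N σ x = gaussianPi x fun _ => (σ ^ 2).toNNReal := rfl

theorem update_mem_sparseSet (hx : (supp x).card < S) (i : Fin N) (s : ℝ) :
    Function.update x i s ∈ sparseSet N S := by
  have hsupp : supp (Function.update x i s) ⊆ insert i (supp x) := by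
    intro j hj
    rcases eq_or_ne j i with rfl | hji
    · exact Finset.mem_insert_self j _
    · simpa [supp, hji] using hj
  calc (supp (Function.update x i s)).card ≤ (insert i (supp x)).card := Finset.card_le_card hsupp
    _ ≤ (supp x).card + 1 := Finset.card_insert_le i _
    _ ≤ S := hx

theorem MSE_eq_sum_evariance (hint : ∀ i, Integrable (fun y => est y i) (gaussP N σ x))
    (hmean : ∀ i, ∫ y, est y i ∂gaussP N σ x = x i) :
    MSE N σ est x = ∑ i, eVar[fun y => est y i; gaussP N σ x] := by
  simp_rw [MSE, evariance_eq_lintegral_ofReal, hmean,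
    ENNReal.ofReal_sum_of_nonneg fun i _ => sq_nonneg (_ - x i)]
  exact lintegral_finsetSum' _ fun i _ =>
    (((hint i).aemeasurable.sub_const _).pow_const 2).ennreal_ofReal

theorem unbiased_id (N S : ℕ) (σ : ℝ) : Unbiased N S σ fun y => y := fun x _ i =>
  ⟨(memLp_eval_gaussianPi x _ i).integrable one_le_two, integral_eval_gaussianPi x _ i⟩

theorem Unbiased.toNNReal_sq_le_evariance (hest : Unbiased N S σ est) (hx : (supp x).card < S)
    (i : Fin N) : ((σ ^ 2).toNNReal : ℝ≥0∞) ≤ eVar[fun y => est y i; gaussP N σ x] :=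
  le_evariance_of_locally_unbiased (v := fun _ => (σ ^ 2).toNNReal)
    (hest x hx.le i).1.aestronglyMeasurable <| .of_forall fun s => by
      simpa [gaussP_eq_gaussianPi] using (hest _ (update_mem_sparseSet hx i s) i).2

end SparseModel

theorem stmt_8_general (N S : ℕ) (σ : ℝ) (x₀ : Fin N → ℝ) (hcard : (supp x₀).card < S) :
    (∀ est : (Fin N → ℝ) → Fin N → ℝ, Unbiased N S σ est →
        ENNReal.ofReal ((N : ℝ) * σ ^ 2) ≤ MSE N σ est x₀) ∧
    Unbiased N S σ (fun y => y) ∧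
    MSE N σ (fun y => y) x₀ = ENNReal.ofReal ((N : ℝ) * σ ^ 2) := by
  have hMSE {est} (hest : Unbiased N S σ est) :
      MSE N σ est x₀ = ∑ i, eVar[fun y => est y i; gaussP N σ x₀] :=
    MSE_eq_sum_evariance (fun i => (hest x₀ hcard.le i).1) fun i => (hest x₀ hcard.le i).2
  have hsum : ENNReal.ofReal ((N : ℝ) * σ ^ 2) = ∑ _i : Fin N, ((σ ^ 2).toNNReal : ℝ≥0∞) := by
    rw [ENNReal.ofReal_mul N.cast_nonneg]
    simp [ENNReal.ofReal]
  refine ⟨fun est hest => ?_, unbiased_id N S σ, ?_⟩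
  · rw [hMSE hest, hsum]
    exact Finset.sum_le_sum fun i _ => hest.toNNReal_sq_le_evariance hcard i
  · rw [hMSE (unbiased_id N S σ), hsum]
    exact Finset.sum_congr rfl fun i _ => evariance_eval_gaussianPi x₀ _ i

/-- For `‖x₀‖₀ < S` the Barankin bound at `x₀` equals `N σ²`: every measurable unbiased
square-integrable estimator has MSE at least `N σ²`, and the least-squares estimator
`x̂_LS(y) = y` is unbiased and attains this value. -/
theorem stmt_8 (N S : ℕ) (σ : ℝ) (hσ : 0 < σ) (hS : 1 ≤ S) (hSN : S < N)
    (x₀ : Fin N → ℝ) (hcard : (supp x₀).card < S) :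
    (∀ est : (Fin N → ℝ) → Fin N → ℝ, Measurable est → Unbiased N S σ est →
        (∀ i, Integrable (fun y => (est y i) ^ 2) (gaussP N σ x₀)) →
        ENNReal.ofReal ((N : ℝ) * σ ^ 2) ≤ MSE N σ est x₀) ∧
    Unbiased N S σ (fun y => y) ∧
    MSE N σ (fun y => y) x₀ = ENNReal.ofReal ((N : ℝ) * σ ^ 2) := by
  obtain ⟨hbound, hLS⟩ := stmt_8_general N S σ x₀ hcard
  exact ⟨fun est _ hest _ => hbound est hest, hLS⟩
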